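/- arXiv:2008.03204 — 5 statements merged into one kernel-verified Lean document; each statement's English description precedes it below -/
import Mathlib

section
/- Let 0 < H < 1/2, ζ > 0, p > 1, C > 0, and set χ := e^{−1/ζ}. Then for every t > 0, ∫₀ᵗ K(r)² dr = C² [ ζ^{−2p} (log(1/(t∧χ)))^{1−2p} · E_{2p}( 2H log(1/(t∧χ)) ) + (t^{2H} − (t∧χ)^{2H})/(2H) ]. -/
open MeasureTheory

/-- The exponential integral `E_b(x) = ∫₁^∞ e^{-x t} t^{-b} dt`. -/
noncomputable def expIntegralE (b x : ℝ) : ℝ :=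
  ∫ t in Set.Ioi (1 : ℝ), Real.exp (-x * t) * t ^ (-b)

/-- The log-modulated kernel `K(r) = C r^{H-1/2} max(ζ log(1/r), 1)^{-p}`. -/
noncomputable def logKernel (H ζ p C r : ℝ) : ℝ :=
  C * r ^ (H - 1/2) * (max (ζ * Real.log (1 / r)) 1) ^ (-p)

/-!
The maximum in the kernel switches at `χ = exp (-1/ζ)`. Below `χ` the squared kernel is a multiple
of `r ^ (2H - 1) * log (1/r) ^ (-2p)`; with `m = min t χ < 1`, the substitution `r = m ^ s` maps
`s ∈ (1, ∞)` onto `r ∈ (0, m)`, turns `log (1/r)` into `s * log (1/m)` and so produces the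
exponential integral. Above `χ` the squared kernel is the pure power `C ^ 2 * r ^ (2H - 1)`.
-/

section LogPowerIntegral

variable {a b m s : ℝ}

lemma image_const_rpow_Ioi (hm₀ : 0 < m) (hm₁ : m < 1) (c : ℝ) :
    (fun s : ℝ => m ^ s) '' Set.Ioi c = Set.Ioo 0 (m ^ c) := by
  ext r
  constructor
  · rintro ⟨s, hs, rfl⟩
    exact ⟨Real.rpow_pos_of_pos hm₀ s, Real.strictAnti_rpow_of_base_lt_one hm₀ hm₁ hs⟩
  · rintro ⟨hr₀, hr⟩
    exact ⟨Real.logb m r, (Real.lt_logb_iff_rpow_lt_of_base_lt_one hm₀ hm₁ hr₀).2 hr,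
      Real.rpow_logb hm₀ hm₁.ne hr₀⟩

lemma hasDerivWithinAt_const_rpow (hm₀ : 0 < m) (S : Set ℝ) :
    HasDerivWithinAt (fun s : ℝ => m ^ s) (m ^ s * Real.log m) S s :=
  (Real.hasStrictDerivAt_const_rpow hm₀ s).hasDerivAt.hasDerivWithinAt

lemma abs_deriv_smul_rpow_mul_log_rpow (hm₀ : 0 < m) (hm₁ : m < 1) (hs : 0 ≤ s) :
    |m ^ s * Real.log m| • ((m ^ s) ^ (a - 1) * Real.log (1 / m ^ s) ^ (-b))
      = Real.log (1 / m) ^ (1 - b) * (Real.exp (-(a * Real.log (1 / m)) * s) * s ^ (-b)) := by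
  have hL : 0 < Real.log (1 / m) := Real.log_pos (one_lt_one_div hm₀ hm₁)
  have hlog : Real.log m = -Real.log (1 / m) := by rw [one_div, Real.log_inv, neg_neg]
  have hjac : |m ^ s * Real.log m| = m ^ s * Real.log (1 / m) := by
    rw [hlog, abs_mul, abs_neg, abs_of_pos hL, abs_of_pos (Real.rpow_pos_of_pos hm₀ s)]
  have hlogpow : Real.log (1 / m ^ s) = Real.log (1 / m) * s := by
    rw [one_div, Real.log_inv, Real.log_rpow hm₀, hlog]; ring
  have hexp : m ^ s * (m ^ s) ^ (a - 1) = Real.exp (-(a * Real.log (1 / m)) * s) := by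
    rw [← Real.rpow_mul hm₀.le, ← Real.rpow_add hm₀, Real.rpow_def_of_pos hm₀, hlog]
    ring_nf
  rw [hjac, hlogpow, ← hexp, Real.mul_rpow hL.le hs, sub_eq_add_neg 1 b, Real.rpow_add hL,
    Real.rpow_one, smul_eq_mul]
  ring

/-- When the integrals diverge (`a < 0`, or `a = 0` and `b ≤ 1`), both sides are the junk value
`0`. -/
theorem integral_rpow_mul_log_rpow (hm₀ : 0 < m) (hm₁ : m < 1) (a b : ℝ) :
    ∫ r in (0 : ℝ)..m, r ^ (a - 1) * Real.log (1 / r) ^ (-b)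
      = Real.log (1 / m) ^ (1 - b) * expIntegralE b (a * Real.log (1 / m)) := by
  have himage := image_const_rpow_Ioi hm₀ hm₁ 1
  rw [Real.rpow_one] at himage
  rw [intervalIntegral.integral_of_le hm₀.le, integral_Ioc_eq_integral_Ioo, ← himage,
    integral_image_eq_integral_abs_deriv_smul measurableSet_Ioi
      (fun _ _ => hasDerivWithinAt_const_rpow hm₀ _)
      (Real.strictAnti_rpow_of_base_lt_one hm₀ hm₁).injective.injOn,
    expIntegralE, ← integral_const_mul]
  exact setIntegral_congr_fun measurableSet_Ioi fun s hs =>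
    abs_deriv_smul_rpow_mul_log_rpow hm₀ hm₁ (zero_le_one.trans (le_of_lt hs))

lemma integrableOn_exp_neg_mul_mul_rpow_Ioi {x c : ℝ} (hx : 0 < x) (hc : 0 < c) (b : ℝ) :
    IntegrableOn (fun s : ℝ => Real.exp (-x * s) * s ^ b) (Set.Ioi c) := by
  refine integrable_of_isBigO_exp_neg (half_pos hx) ?_ ?_
  · refine ContinuousOn.mul (by fun_prop) (continuousOn_id.rpow_const fun s hs => Or.inl ?_)
    exact (hc.trans_le hs).ne'
  · have hpow := (isLittleO_rpow_exp_pos_mul_atTop b (half_pos hx)).isBigO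
    refine ((Asymptotics.isBigO_refl (fun s : ℝ => Real.exp (-x * s)) _).mul hpow).congr_right
      fun s => ?_
    rw [← Real.exp_add]
    ring_nf

theorem intervalIntegrable_rpow_mul_log_rpow (ha : 0 < a) (hm₀ : 0 < m) (hm₁ : m < 1) (b : ℝ) :
    IntervalIntegrable (fun r => r ^ (a - 1) * Real.log (1 / r) ^ (-b)) volume 0 m := by
  have himage := image_const_rpow_Ioi hm₀ hm₁ 1
  rw [Real.rpow_one] at himage
  have hrate : 0 < a * Real.log (1 / m) := mul_pos ha (Real.log_pos (one_lt_one_div hm₀ hm₁))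
  rw [intervalIntegrable_iff_integrableOn_Ioo_of_le hm₀.le, ← himage,
    integrableOn_image_iff_integrableOn_abs_deriv_smul measurableSet_Ioi
      (fun _ _ => hasDerivWithinAt_const_rpow hm₀ _)
      (Real.strictAnti_rpow_of_base_lt_one hm₀ hm₁).injective.injOn]
  refine IntegrableOn.congr_fun
    ((integrableOn_exp_neg_mul_mul_rpow_Ioi hrate one_pos (-b)).const_mul
      (Real.log (1 / m) ^ (1 - b))) (fun s hs => ?_) measurableSet_Ioi
  exact (abs_deriv_smul_rpow_mul_log_rpow hm₀ hm₁ (zero_le_one.trans (le_of_lt hs))).symm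

end LogPowerIntegral

section LogKernel

variable {H ζ p C r m t : ℝ}

lemma one_le_mul_log_one_div_iff (hζ : 0 < ζ) (hr : 0 < r) :
    1 ≤ ζ * Real.log (1 / r) ↔ r ≤ Real.exp (-1 / ζ) := by
  rw [← Real.log_le_iff_le_exp hr, ← div_le_iff₀' hζ, one_div r, Real.log_inv, neg_div, le_neg]

lemma mul_log_one_div_le_one_iff (hζ : 0 < ζ) (hr : 0 < r) :
    ζ * Real.log (1 / r) ≤ 1 ↔ Real.exp (-1 / ζ) ≤ r := by
  rw [← Real.le_log_iff_exp_le hr, ← le_div_iff₀' hζ, one_div r, Real.log_inv, neg_div, neg_le]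

lemma exp_neg_one_div_lt_one (hζ : 0 < ζ) : Real.exp (-1 / ζ) < 1 :=
  Real.exp_lt_one_iff.2 (div_neg_of_neg_of_pos neg_one_lt_zero hζ)

lemma logKernel_sq (hr : 0 ≤ r) :
    logKernel H ζ p C r ^ 2
      = C ^ 2 * (r ^ (2 * H - 1) * max (ζ * Real.log (1 / r)) 1 ^ (-(2 * p))) := by
  have hmax : 0 ≤ max (ζ * Real.log (1 / r)) 1 := zero_le_one.trans (le_max_right _ _)
  rw [logKernel, mul_pow, mul_pow, ← Real.rpow_mul_natCast hr, ← Real.rpow_mul_natCast hmax,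
    mul_assoc]
  push_cast
  ring_nf

lemma logKernel_sq_of_le_exp (hζ : 0 < ζ) (hr : 0 < r) (hrχ : r ≤ Real.exp (-1 / ζ)) :
    logKernel H ζ p C r ^ 2
      = C ^ 2 * ζ ^ (-(2 * p)) * (r ^ (2 * H - 1) * Real.log (1 / r) ^ (-(2 * p))) := by
  have hmax : 1 ≤ ζ * Real.log (1 / r) := (one_le_mul_log_one_div_iff hζ hr).2 hrχ
  have hlog : 0 ≤ Real.log (1 / r) := (pos_of_mul_pos_right (one_pos.trans_le hmax) hζ.le).le
  rw [logKernel_sq hr.le, max_eq_left hmax, Real.mul_rpow hζ.le hlog]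
  ring

lemma logKernel_sq_of_exp_le (hζ : 0 < ζ) (hrχ : Real.exp (-1 / ζ) ≤ r) :
    logKernel H ζ p C r ^ 2 = C ^ 2 * r ^ (2 * H - 1) := by
  have hr : 0 < r := (Real.exp_pos _).trans_le hrχ
  have hmax : ζ * Real.log (1 / r) ≤ 1 := (mul_log_one_div_le_one_iff hζ hr).2 hrχ
  rw [logKernel_sq hr.le, max_eq_right hmax, Real.one_rpow, mul_one]

lemma intervalIntegrable_logKernel_sq_of_le_exp (hH : 0 < H) (hζ : 0 < ζ) (hm : 0 < m)
    (hmχ : m ≤ Real.exp (-1 / ζ)) :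
    IntervalIntegrable (fun r => logKernel H ζ p C r ^ 2) volume 0 m := by
  have hm₁ : m < 1 := hmχ.trans_lt (exp_neg_one_div_lt_one hζ)
  refine ((intervalIntegrable_rpow_mul_log_rpow (mul_pos two_pos hH) hm hm₁ (2 * p)).const_mul
    (C ^ 2 * ζ ^ (-(2 * p)))).congr fun r hr => ?_
  rw [Set.uIoc_of_le hm.le] at hr
  exact (logKernel_sq_of_le_exp hζ hr.1 (hr.2.trans hmχ)).symm

lemma integral_logKernel_sq_of_le_exp (hζ : 0 < ζ) (hm : 0 < m) (hmχ : m ≤ Real.exp (-1 / ζ)) :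
    ∫ r in (0 : ℝ)..m, logKernel H ζ p C r ^ 2
      = C ^ 2 * (ζ ^ (-(2 * p)) * Real.log (1 / m) ^ (1 - 2 * p)
          * expIntegralE (2 * p) (2 * H * Real.log (1 / m))) := by
  have hm₁ : m < 1 := hmχ.trans_lt (exp_neg_one_div_lt_one hζ)
  calc ∫ r in (0 : ℝ)..m, logKernel H ζ p C r ^ 2
    _ = ∫ r in (0 : ℝ)..m,
          C ^ 2 * ζ ^ (-(2 * p)) * (r ^ (2 * H - 1) * Real.log (1 / r) ^ (-(2 * p))) := by
      refine intervalIntegral.integral_congr_Ioo_of_le hm.le fun r hr => ?_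
      exact logKernel_sq_of_le_exp hζ hr.1 (hr.2.le.trans hmχ)
    _ = _ := by
      rw [intervalIntegral.integral_const_mul, integral_rpow_mul_log_rpow hm hm₁]
      ring

lemma eqOn_logKernel_sq_uIcc (hζ : 0 < ζ) (hm : Real.exp (-1 / ζ) ≤ m)
    (ht : Real.exp (-1 / ζ) ≤ t) :
    Set.EqOn (fun r => logKernel H ζ p C r ^ 2) (fun r => C ^ 2 * r ^ (2 * H - 1))
      (Set.uIcc m t) :=
  fun _ hr => logKernel_sq_of_exp_le hζ ((le_min hm ht).trans hr.1)

lemma intervalIntegrable_logKernel_sq_of_exp_le (hζ : 0 < ζ) (hm : Real.exp (-1 / ζ) ≤ m)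
    (ht : Real.exp (-1 / ζ) ≤ t) :
    IntervalIntegrable (fun r => logKernel H ζ p C r ^ 2) volume m t := by
  have hzero : (0 : ℝ) ∉ Set.uIcc m t := fun h =>
    ((Real.exp_pos _).trans_le (le_min hm ht)).not_ge h.1
  exact ((intervalIntegral.intervalIntegrable_rpow (Or.inr hzero)).const_mul (C ^ 2)).congr
    ((eqOn_logKernel_sq_uIcc hζ hm ht).symm.mono Set.uIoc_subset_uIcc)

lemma integral_logKernel_sq_of_exp_le (hH : 0 < H) (hζ : 0 < ζ) (hm : Real.exp (-1 / ζ) ≤ m)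
    (ht : Real.exp (-1 / ζ) ≤ t) :
    ∫ r in m..t, logKernel H ζ p C r ^ 2
      = C ^ 2 * ((t ^ (2 * H) - m ^ (2 * H)) / (2 * H)) := by
  rw [intervalIntegral.integral_congr (eqOn_logKernel_sq_uIcc hζ hm ht),
    intervalIntegral.integral_const_mul, integral_rpow (Or.inl (by linarith)), sub_add_cancel]

theorem variance_log_fbm_general (hH : 0 < H) (hζ : 0 < ζ) (p C : ℝ) (ht : 0 < t) :
    ∫ r in (0 : ℝ)..t, logKernel H ζ p C r ^ 2
      = C ^ 2 * (ζ ^ (-(2 * p)) * Real.log (1 / min t (Real.exp (-1 / ζ))) ^ (1 - 2 * p)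
            * expIntegralE (2 * p) (2 * H * Real.log (1 / min t (Real.exp (-1 / ζ))))
          + (t ^ (2 * H) - min t (Real.exp (-1 / ζ)) ^ (2 * H)) / (2 * H)) := by
  rcases le_total t (Real.exp (-1 / ζ)) with htχ | hχt
  · rw [min_eq_left htχ, sub_self, zero_div, add_zero, integral_logKernel_sq_of_le_exp hζ ht htχ]
  · have hχ : 0 < Real.exp (-1 / ζ) := Real.exp_pos _
    rw [min_eq_right hχt, mul_add, ← integral_logKernel_sq_of_le_exp hζ hχ le_rfl,
      ← integral_logKernel_sq_of_exp_le hH hζ le_rfl hχt,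
      intervalIntegral.integral_add_adjacent_intervals
        (intervalIntegrable_logKernel_sq_of_le_exp hH hζ hχ le_rfl)
        (intervalIntegrable_logKernel_sq_of_exp_le hζ le_rfl hχt)]

end LogKernel

theorem variance_log_fbm (H ζ p C : ℝ) (hH0 : 0 < H) (hH : H < 1/2)
    (hζ : 0 < ζ) (hp : 1 < p) (hC : 0 < C) (χ : ℝ) (hχ : χ = Real.exp (-1/ζ)) :
    ∀ t : ℝ, 0 < t →
      ∫ r in (0 : ℝ)..t, (logKernel H ζ p C r) ^ 2
        = C ^ 2 * (ζ ^ (-(2 * p)) * (Real.log (1 / min t χ)) ^ (1 - 2 * p)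
              * expIntegralE (2 * p) (2 * H * Real.log (1 / min t χ))
            + (t ^ (2 * H) - (min t χ) ^ (2 * H)) / (2 * H)) := by
  subst hχ
  exact fun _ ht => variance_log_fbm_general hH0 hζ p C ht
end

section
/- Let 0 < H < 1/2, p > 1, ζ > 0 with ζ p ≤ 1/2 − H (a condition ensuring that the kernel K is nonincreasing), and C > 0. Then there exists a constant C' > 0, depending only on H, ζ, p, C, such that for all 0 ≤ s < t ≤ 1: ∫ₛᵗ K(t−r)² dr + ∫₀ˢ ( K(t−r) − K(s−r) )² dr ≤ C' (t−s)^{2H}. (By the Itô isometry the left-hand side equals E[|Ŵ_t − Ŵ_s|²] for the log-modulated fractional Brownian motion Ŵ.) -/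
open MeasureTheory

/-!
For a nonnegative nonincreasing kernel `K`, `(K(t-r) - K(s-r))² ≤ K(s-r)² - K(t-r)²`, and the
right-hand side telescopes: its integral over `[0, s]` is `∫₀^{t-s} K² - ∫ₛᵗ K²`. Hence the
variance of the increment is at most `2 ∫₀^{t-s} K²`, and for the log-modulated kernel
`K(r)² ≤ C² r^{2H-1}`. That kernel is nonincreasing because, with `u = r^ζ`, it equals
`C r^{H-1/2+ζp} (u max(-log u, 1))^{-p}`, where `u ↦ u max(-log u, 1)` is nondecreasing.
-/

open Set

section AntitoneKernel

variable {E : Type*} [NormedAddCommGroup E] {f : ℝ → E} {s t : ℝ}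

lemma intervalIntegrable_of_right_le {μ : Measure ℝ} {a : ℝ} (has : a ≤ s) (hst : s ≤ t)
    (hf : IntervalIntegrable f μ a t) : IntervalIntegrable f μ a s := by
  refine hf.mono_set ?_
  rw [uIcc_of_le has, uIcc_of_le (has.trans hst)]
  exact Icc_subset_Icc_right hst

lemma intervalIntegrable_comp_sub_left_of_le (hs : 0 ≤ s) (hst : s ≤ t)
    (hf : IntervalIntegrable f volume 0 t) :
    IntervalIntegrable (fun r ↦ f (t - r)) volume 0 s := by
  have hft : IntervalIntegrable (fun r ↦ f (t - r)) volume 0 t := by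
    simpa only [sub_self, sub_zero] using (hf.comp_sub_left t).symm
  exact intervalIntegrable_of_right_le hs hst hft

lemma integral_comp_sub_left_sub_comp_sub_left [NormedSpace ℝ E] (hs : 0 ≤ s) (hst : s ≤ t)
    (hf : IntervalIntegrable f volume 0 t) :
    ∫ r in 0..s, (f (s - r) - f (t - r)) = (∫ r in 0..(t - s), f r) - ∫ r in s..t, f r := by
  have hf_s := intervalIntegrable_of_right_le hs hst hf
  have hf_ts := intervalIntegrable_of_right_le (sub_nonneg.2 hst) (sub_le_self t hs) hf
  rw [intervalIntegral.integral_sub (intervalIntegrable_comp_sub_left_of_le hs le_rfl hf_s)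
      (intervalIntegrable_comp_sub_left_of_le hs hst hf),
    intervalIntegral.integral_comp_sub_left, intervalIntegral.integral_comp_sub_left,
    sub_self, sub_zero, sub_zero]
  exact intervalIntegral.integral_interval_sub_interval_comm hf_s (hf_ts.symm.trans hf) hf_ts

lemma sq_sub_le_sq_sub_sq {R : Type*} [CommRing R] [LinearOrder R] [IsStrictOrderedRing R]
    {a b : R} (ha : 0 ≤ a) (hab : a ≤ b) : (a - b) ^ 2 ≤ b ^ 2 - a ^ 2 := by
  nlinarith

variable {K : ℝ → ℝ}

lemma integral_sq_sub_le_of_antitoneOn (hK_nonneg : ∀ r ∈ Ioi 0, 0 ≤ K r)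
    (hK_anti : AntitoneOn K (Ioi 0)) (hs : 0 ≤ s) (hst : s ≤ t)
    (hK_int : IntervalIntegrable (fun r ↦ K r ^ 2) volume 0 t) :
    ∫ r in 0..s, (K (t - r) - K (s - r)) ^ 2 ≤ ∫ r in 0..(t - s), K r ^ 2 := by
  have hK_int_s : IntervalIntegrable (fun r ↦ K r ^ 2) volume 0 s :=
    intervalIntegrable_of_right_le hs hst hK_int
  have h_int : IntervalIntegrable (fun r ↦ K (s - r) ^ 2 - K (t - r) ^ 2) volume 0 s :=
    (intervalIntegrable_comp_sub_left_of_le hs le_rfl hK_int_s).sub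
      (intervalIntegrable_comp_sub_left_of_le hs hst hK_int)
  have h_pointwise : ∀ r ∈ Ioo 0 s,
      (K (t - r) - K (s - r)) ^ 2 ≤ K (s - r) ^ 2 - K (t - r) ^ 2 := by
    intro r hr
    have hsr : 0 < s - r := sub_pos.2 hr.2
    have hsr_le : s - r ≤ t - r := sub_le_sub_right hst r
    have htr : 0 < t - r := hsr.trans_le hsr_le
    exact sq_sub_le_sq_sub_sq (hK_nonneg _ htr) (hK_anti hsr htr hsr_le)
  calc ∫ r in 0..s, (K (t - r) - K (s - r)) ^ 2
      ≤ ∫ r in 0..s, (K (s - r) ^ 2 - K (t - r) ^ 2) := by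
        rw [intervalIntegrable_iff_integrableOn_Ioo_of_le hs] at h_int
        simp only [intervalIntegral.integral_of_le hs, integral_Ioc_eq_integral_Ioo]
        exact integral_mono_of_nonneg (ae_of_all _ fun r ↦ sq_nonneg _) h_int
          (ae_restrict_of_forall_mem measurableSet_Ioo h_pointwise)
    _ = (∫ r in 0..(t - s), K r ^ 2) - ∫ r in s..t, K r ^ 2 :=
        integral_comp_sub_left_sub_comp_sub_left hs hst hK_int
    _ ≤ ∫ r in 0..(t - s), K r ^ 2 :=
        sub_le_self _ (intervalIntegral.integral_nonneg hst fun r _ ↦ sq_nonneg _)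

lemma incremental_variance_le_of_antitoneOn (hK_nonneg : ∀ r ∈ Ioi 0, 0 ≤ K r)
    (hK_anti : AntitoneOn K (Ioi 0)) (hs : 0 ≤ s) (hst : s ≤ t)
    (hK_int : IntervalIntegrable (fun r ↦ K r ^ 2) volume 0 t) :
    (∫ r in s..t, K (t - r) ^ 2) + ∫ r in 0..s, (K (t - r) - K (s - r)) ^ 2 ≤
      2 * ∫ r in 0..(t - s), K r ^ 2 := by
  have h_recent : ∫ r in s..t, K (t - r) ^ 2 = ∫ r in 0..(t - s), K r ^ 2 := by
    rw [intervalIntegral.integral_comp_sub_left (fun r ↦ K r ^ 2), sub_self]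
  have h_past := integral_sq_sub_le_of_antitoneOn hK_nonneg hK_anti hs hst hK_int
  linarith

end AntitoneKernel

section LogKernel

lemma monotoneOn_mul_max_neg_log_one :
    MonotoneOn (fun u : ℝ ↦ u * max (-Real.log u) 1) (Ioi 0) := by
  intro u hu v hv huv
  rw [mem_Ioi] at hu hv
  have h_one : 1 ≤ max (-Real.log v) 1 := le_max_right _ _
  have h_log : u * (Real.log v - Real.log u) ≤ v - u := by
    have h := Real.log_le_sub_one_of_pos (div_pos hv hu)
    rw [Real.log_div hv.ne' hu.ne'] at h
    calc u * (Real.log v - Real.log u) ≤ u * (v / u - 1) := by gcongr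
      _ = v - u := by field_simp
  change u * max (-Real.log u) 1 ≤ v * max (-Real.log v) 1
  rw [mul_max_of_nonneg _ _ hu.le]
  refine max_le ?_ (by gcongr)
  calc u * -Real.log u = u * -Real.log v + u * (Real.log v - Real.log u) := by ring
    _ ≤ u * max (-Real.log v) 1 + (v - u) * max (-Real.log v) 1 := by
        gcongr ?_ + ?_
        · gcongr
          exact le_max_left _ _
        · exact h_log.trans (le_mul_of_one_le_right (sub_nonneg.2 huv) h_one)
    _ = v * max (-Real.log v) 1 := by ring

variable {H ζ p C r : ℝ}

lemma logKernel_nonneg (hC : 0 ≤ C) (hr : 0 ≤ r) : 0 ≤ logKernel H ζ p C r := by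
  unfold logKernel
  positivity

lemma measurable_logKernel : Measurable (logKernel H ζ p C) := by
  unfold logKernel
  fun_prop

lemma logKernel_eq_mul_rpow_mul_max_neg_log (hr : 0 < r) :
    logKernel H ζ p C r =
      C * (r ^ (H - 1 / 2 + ζ * p) * (r ^ ζ * max (-Real.log (r ^ ζ)) 1) ^ (-p)) := by
  have h_cancel : r ^ (H - 1 / 2 + ζ * p) * r ^ (ζ * -p) = r ^ (H - 1 / 2) := by
    rw [← Real.rpow_add hr]
    ring_nf
  rw [Real.mul_rpow (by positivity) (by positivity), ← Real.rpow_mul hr.le, ← mul_assoc (r ^ _),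
    h_cancel, Real.log_rpow hr, logKernel, one_div r, Real.log_inv, mul_neg, mul_assoc]

lemma antitoneOn_logKernel (hζ : 0 ≤ ζ) (hp : 0 ≤ p) (hζp : ζ * p ≤ 1 / 2 - H) (hC : 0 ≤ C) :
    AntitoneOn (logKernel H ζ p C) (Ioi 0) := by
  intro x hx y hy hxy
  rw [mem_Ioi] at hx hy
  rw [logKernel_eq_mul_rpow_mul_max_neg_log hx, logKernel_eq_mul_rpow_mul_max_neg_log hy]
  have h_base : x ^ ζ * max (-Real.log (x ^ ζ)) 1 ≤ y ^ ζ * max (-Real.log (y ^ ζ)) 1 :=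
    monotoneOn_mul_max_neg_log_one (Real.rpow_pos_of_pos hx ζ) (Real.rpow_pos_of_pos hy ζ)
      (Real.rpow_le_rpow hx.le hxy hζ)
  gcongr C * (?_ * ?_)
  · exact Real.rpow_le_rpow_of_nonpos hx hxy (by linarith)
  · exact Real.rpow_le_rpow_of_nonpos (by positivity) h_base (neg_nonpos.2 hp)

lemma logKernel_sq_le (hp : 0 ≤ p) (hr : 0 ≤ r) :
    logKernel H ζ p C r ^ 2 ≤ C ^ 2 * r ^ (2 * H - 1) := by
  have h_modulation : (max (ζ * Real.log (1 / r)) 1) ^ (-p) ≤ 1 :=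
    Real.rpow_le_one_of_one_le_of_nonpos (le_max_right _ _) (neg_nonpos.2 hp)
  have h_rpow : (r ^ (H - 1 / 2)) ^ 2 = r ^ (2 * H - 1) := by
    rw [← Real.rpow_mul_natCast hr]
    ring_nf
  rw [logKernel, mul_pow, mul_pow, h_rpow]
  exact mul_le_of_le_one_right (by positivity) (pow_le_one₀ (by positivity) h_modulation)

lemma intervalIntegrable_logKernel_sq (hH : 0 < H) (hp : 0 ≤ p) {b : ℝ} (hb : 0 ≤ b) :
    IntervalIntegrable (fun r ↦ logKernel H ζ p C r ^ 2) volume 0 b := by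
  have h_dom : IntervalIntegrable (fun r : ℝ ↦ C ^ 2 * r ^ (2 * H - 1)) volume 0 b :=
    (intervalIntegral.intervalIntegrable_rpow' (by linarith)).const_mul _
  refine h_dom.mono_fun' (measurable_logKernel.pow_const 2).aestronglyMeasurable ?_
  rw [uIoc_of_le hb]
  filter_upwards [ae_restrict_mem measurableSet_Ioc] with r hr
  rw [Real.norm_of_nonneg (sq_nonneg _)]
  exact logKernel_sq_le hp hr.1.le

lemma integral_logKernel_sq_le (hH : 0 < H) (hp : 0 ≤ p) {b : ℝ} (hb : 0 ≤ b) :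
    ∫ r in 0..b, logKernel H ζ p C r ^ 2 ≤ C ^ 2 / (2 * H) * b ^ (2 * H) := by
  calc ∫ r in 0..b, logKernel H ζ p C r ^ 2
      ≤ ∫ r in 0..b, C ^ 2 * r ^ (2 * H - 1) :=
        intervalIntegral.integral_mono_on hb (intervalIntegrable_logKernel_sq hH hp hb)
          ((intervalIntegral.intervalIntegrable_rpow' (by linarith)).const_mul _)
          fun r hr ↦ logKernel_sq_le hp hr.1
    _ = C ^ 2 / (2 * H) * b ^ (2 * H) := by
        rw [intervalIntegral.integral_const_mul, integral_rpow (Or.inl (by linarith)),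
          sub_add_cancel, Real.zero_rpow (by positivity)]
        ring

end LogKernel

theorem incremental_variance_bound_general {H ζ p C s t : ℝ} (hH : 0 < H) (hp : 0 ≤ p)
    (hζ : 0 ≤ ζ) (hζp : ζ * p ≤ 1 / 2 - H) (hC : 0 ≤ C) (hs : 0 ≤ s) (hst : s ≤ t) :
    (∫ r in s..t, logKernel H ζ p C (t - r) ^ 2)
        + ∫ r in 0..s, (logKernel H ζ p C (t - r) - logKernel H ζ p C (s - r)) ^ 2
      ≤ C ^ 2 / H * (t - s) ^ (2 * H) := by
  calc _ ≤ 2 * ∫ r in 0..(t - s), logKernel H ζ p C r ^ 2 :=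
        incremental_variance_le_of_antitoneOn (fun _ hr ↦ logKernel_nonneg hC (le_of_lt hr))
          (antitoneOn_logKernel hζ hp hζp hC) hs hst
          (intervalIntegrable_logKernel_sq hH hp (hs.trans hst))
    _ ≤ 2 * (C ^ 2 / (2 * H) * (t - s) ^ (2 * H)) := by
        gcongr
        exact integral_logKernel_sq_le hH hp (sub_nonneg.2 hst)
    _ = C ^ 2 / H * (t - s) ^ (2 * H) := by field_simp

theorem incremental_variance_bound (H ζ p C : ℝ) (hH0 : 0 < H) (hH : H < 1/2)
    (hp : 1 < p) (hζ : 0 < ζ) (hζp : ζ * p ≤ 1/2 - H) (hC : 0 < C) :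
    ∃ C' : ℝ, 0 < C' ∧ ∀ s t : ℝ, 0 ≤ s → s < t → t ≤ 1 →
      (∫ r in s..t, (logKernel H ζ p C (t - r)) ^ 2)
        + ∫ r in (0 : ℝ)..s, (logKernel H ζ p C (t - r) - logKernel H ζ p C (s - r)) ^ 2
      ≤ C' * (t - s) ^ (2 * H) :=
  ⟨C ^ 2 / H, by positivity, fun _ _ hs hst _ ↦
    incremental_variance_bound_general hH0 (zero_le_one.trans hp.le) hζ.le hζp hC.le hs hst.le⟩
end

section
/- For every b > 0, the exponential integral satisfies the first-order asymptotic expansion E_b(x) = (e^{−x}/x)(1 + o(1)) as x → ∞; that is, x e^{x} E_b(x) → 1 as x → ∞. -/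
open MeasureTheory Filter

/-!
As `x → ∞`, the probability densities `x * exp (-x * (t - a))` on `(a, ∞)` concentrate at `a`.
Hence `x * exp (x * a)` times the integral of `exp (-x * t) • f t` over `(a, ∞)` tends to the right
limit of `f` at `a`, for every `f` of at most exponential growth. The exponential integral is the
case `f t = t ^ (-b)`, `a = 1`.
-/

open Set Topology

theorem setIntegral_Ioc_mul_exp_neg_mul_sub {a b : ℝ} (hab : a ≤ b) (x : ℝ) :
    ∫ t in Ioc a b, x * Real.exp (-x * (t - a)) = 1 - Real.exp (-x * (b - a)) := by
  have hderiv (t : ℝ) : HasDerivAt (fun t ↦ -Real.exp (-x * (t - a)))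
      (x * Real.exp (-x * (t - a))) t := by
    convert! (((hasDerivAt_id t).sub_const a).const_mul (-x)).exp.neg using 1
    simp only [id_eq]
    ring
  rw [← intervalIntegral.integral_of_le hab,
    intervalIntegral.integral_eq_sub_of_hasDerivAt (fun t _ ↦ hderiv t)
      (Continuous.intervalIntegrable (by fun_prop) a b)]
  simp only [sub_self, mul_zero, Real.exp_zero]
  ring

theorem tendstoUniformlyOn_mul_exp_neg_mul_sub_Ici {a b : ℝ} (hab : a < b) :
    TendstoUniformlyOn (fun x t ↦ x * Real.exp (-x * (t - a))) 0 atTop (Ici b) := by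
  have hbound : Tendsto (fun x ↦ x * Real.exp (-x * (b - a))) atTop (𝓝 0) := by
    simpa only [Real.rpow_one, neg_mul, mul_comm (b - a)] using
      tendsto_rpow_mul_exp_neg_mul_atTop_nhds_zero 1 (b - a) (sub_pos.2 hab)
  rw [Metric.tendstoUniformlyOn_iff]
  intro ε hε
  filter_upwards [hbound.eventually_lt_const hε, eventually_ge_atTop 0] with x hxε hx t ht
  rw [Pi.zero_apply, dist_zero_left, Real.norm_of_nonneg (by positivity)]
  refine lt_of_le_of_lt ?_ hxε
  have hexp : -x * (t - a) ≤ -x * (b - a) :=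
    mul_le_mul_of_nonpos_left (sub_le_sub_right ht a) (neg_nonpos.2 hx)
  gcongr

section InitialValue

variable {E : Type*} [NormedAddCommGroup E] [NormedSpace ℝ E] [CompleteSpace E]
  {f : ℝ → E} {a : ℝ} {l : E}

theorem tendsto_setIntegral_Ioi_mul_exp_neg_mul_sub_smul (hf : IntegrableOn f (Ioi a))
    (hl : Tendsto f (𝓝[>] a) (𝓝 l)) :
    Tendsto (fun x ↦ ∫ t in Ioi a, (x * Real.exp (-x * (t - a))) • f t) atTop (𝓝 l) := by
  have hmass : Tendsto (fun x ↦ ∫ t in Ioc a (a + 1), x * Real.exp (-x * (t - a)))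
      atTop (𝓝 1) := by
    simp_rw [setIntegral_Ioc_mul_exp_neg_mul_sub (le_add_of_nonneg_right zero_le_one : a ≤ a + 1)]
    simpa using Real.tendsto_exp_neg_atTop_nhds_zero.const_sub 1
  refine tendsto_setIntegral_peak_smul_of_integrableOn_of_tendsto measurableSet_Ioi
    measurableSet_Ioc Ioc_subset_Ioi_self (Ioc_mem_nhdsGT (lt_add_one a)) measure_Ioc_lt_top.ne
    ?nonneg ?awayFromPeak hmass (.of_forall fun x ↦ ?measurable) hf hl
  case nonneg =>
    filter_upwards [eventually_ge_atTop 0] with x hx t _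
    positivity
  case awayFromPeak =>
    intro u hu hau
    obtain ⟨b, hab, hbu⟩ := exists_Ico_subset_of_mem_nhds (hu.mem_nhds hau) (exists_gt a)
    refine (tendstoUniformlyOn_mul_exp_neg_mul_sub_Ici hab).mono fun t ⟨hat, htu⟩ ↦ ?_
    exact not_lt.1 fun htb ↦ htu (hbu ⟨le_of_lt hat, htb⟩)
  case measurable =>
    exact Continuous.aestronglyMeasurable (by fun_prop)

theorem tendsto_mul_exp_smul_setIntegral_Ioi_exp_neg_mul_smul {c : ℝ}
    (hf : IntegrableOn (fun t ↦ Real.exp (-c * t) • f t) (Ioi a))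
    (hl : Tendsto f (𝓝[>] a) (𝓝 l)) :
    Tendsto (fun x ↦ (x * Real.exp (x * a)) • ∫ t in Ioi a, Real.exp (-x * t) • f t)
      atTop (𝓝 l) := by
  -- Moving `exp (-c * t)` from the kernel to `f` makes `f` integrable and replaces `x` by `x - c`.
  have hdamped : Tendsto (fun t ↦ Real.exp (-c * t) • f t) (𝓝[>] a)
      (𝓝 (Real.exp (-c * a) • l)) :=
    (Continuous.continuousWithinAt (by fun_prop)).tendsto.smul hl
  have hshift : Tendsto (fun x ↦ x - c) atTop atTop := tendsto_atTop_add_const_right _ _ tendsto_id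
  have hratio : Tendsto (fun x ↦ (1 + c * (x - c)⁻¹) * Real.exp (c * a)) atTop
      (𝓝 (Real.exp (c * a))) := by
    simpa using
      (((tendsto_inv_atTop_zero.comp hshift).const_mul c).const_add 1).mul_const (Real.exp (c * a))
  have hlim := hratio.smul
    ((tendsto_setIntegral_Ioi_mul_exp_neg_mul_sub_smul hf hdamped).comp hshift)
  rw [smul_smul, ← Real.exp_add, neg_mul, add_neg_cancel, Real.exp_zero, one_smul] at hlim
  refine hlim.congr' ?_
  filter_upwards [eventually_gt_atTop c] with x hx
  have hxc : x - c ≠ 0 := (sub_pos.2 hx).ne'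
  simp only [Function.comp_apply, ← integral_smul, smul_smul]
  congr! 3 with t
  have hexp : Real.exp (c * a) * (Real.exp (-(x - c) * (t - a)) * Real.exp (-c * t)) =
      Real.exp (x * a) * Real.exp (-x * t) := by
    simp only [← Real.exp_add]
    ring_nf
  have hscale : (1 + c * (x - c)⁻¹) * (x - c) = x := by
    field_simp
    ring
  linear_combination (1 + c * (x - c)⁻¹) * (x - c) * hexp +
    Real.exp (x * a) * Real.exp (-x * t) * hscale

end InitialValue

theorem integrableOn_Ioi_exp_neg_mul_rpow {a : ℝ} (ha : 0 < a) (s : ℝ) :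
    IntegrableOn (fun t ↦ Real.exp (-t) * t ^ s) (Ioi a) := by
  refine integrable_of_isBigO_exp_neg one_half_pos ?_ (Real.Gamma_integrand_isLittleO s).isBigO
  exact Continuous.continuousOn (by fun_prop) |>.mul <|
    continuousOn_id.rpow_const fun t ht ↦ .inl (ha.trans_le ht).ne'

theorem exp_integral_asymptotic_general (b : ℝ) :
    Tendsto (fun x : ℝ => x * Real.exp x * expIntegralE b x) atTop (nhds 1) := by
  have hpow : Tendsto (fun t : ℝ ↦ t ^ (-b)) (𝓝[>] 1) (𝓝 1) := by
    simpa using ((Real.continuousAt_rpow_const 1 (-b) (.inl one_ne_zero)).tendsto).mono_left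
      nhdsWithin_le_nhds
  have hint : IntegrableOn (fun t : ℝ ↦ Real.exp (-1 * t) • t ^ (-b)) (Ioi 1) := by
    simpa using integrableOn_Ioi_exp_neg_mul_rpow one_pos (-b)
  simpa [expIntegralE] using tendsto_mul_exp_smul_setIntegral_Ioi_exp_neg_mul_smul hint hpow

theorem exp_integral_asymptotic (b : ℝ) (hb : 0 < b) :
    Tendsto (fun x : ℝ => x * Real.exp x * expIntegralE b x) atTop (nhds 1) :=
  exp_integral_asymptotic_general b
end

section
/- Let 0 < H < 1/2, ζ > 0, p > 1, C > 0. As t → 0⁺, ∫₀ᵗ K(s)² ds ∼ ( C² ζ^{−2p} / (2H) ) · (log(1/t))^{−2p} · t^{2H}; in particular, the standard deviation s(t) := ( ∫₀ᵗ K(s)² ds )^{1/2} is regularly varying at 0 with index H. -/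
open MeasureTheory Filter

/-- The standard deviation `s(t) = (∫₀ᵗ K(s)² ds)^{1/2}`. -/
noncomputable def sdev (H ζ p C t : ℝ) : ℝ :=
  Real.sqrt (∫ s in (0 : ℝ)..t, (logKernel H ζ p C s) ^ 2)

/-!
Near `0` the cap in the kernel is inactive, so `K(r)² = C² ζ^{-2p} log(1/r)^{-2p} r^{2H-1}`. This is
equivalent to the derivative of `C² ζ^{-2p} / (2H) · log(1/t)^{-2p} t^{2H}`, because differentiating
the logarithm costs a factor `1 / log(1/t) → 0`; l'Hôpital's rule then gives the asymptotics of the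
variance. Regular variation is stable under equivalence at `0`, products and powers, so that of the
standard deviation is inherited from the explicit equivalent.
-/

open Asymptotics Topology

section Integral

variable {E : Type*} [NormedAddCommGroup E] {f : ℝ → E} {a : ℝ}

theorem eventually_intervalIntegrable_of_integrableAtFilter_nhdsGT
    (hf : IntegrableAtFilter f (𝓝[>] a)) :
    ∀ᶠ t in 𝓝[>] a, IntervalIntegrable f volume a t := by
  obtain ⟨s, hs, hfs⟩ := hf
  obtain ⟨b, hab, hbs⟩ := mem_nhdsGT_iff_exists_Ioc_subset.1 hs
  filter_upwards [Ioc_mem_nhdsGT hab] with t ht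
  rw [intervalIntegrable_iff_integrableOn_Ioc_of_le ht.1.le]
  exact hfs.mono_set ((Set.Ioc_subset_Ioc_right ht.2).trans hbs)

theorem stronglyMeasurableAtFilter_nhdsGT_of_eventually_continuousAt
    (hf : ∀ᶠ t in 𝓝[>] a, ContinuousAt f t) :
    StronglyMeasurableAtFilter f (𝓝[>] a) := by
  obtain ⟨b, hab, hb⟩ := mem_nhdsGT_iff_exists_Ioo_subset.1 hf
  have hcont : ContinuousOn f (Set.Ioo a b) := fun t ht ↦ (hb ht).continuousWithinAt
  exact ⟨Set.Ioo a b, Ioo_mem_nhdsGT hab, hcont.aestronglyMeasurable measurableSet_Ioo⟩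

theorem tendsto_intervalIntegral_nhdsGT_zero [NormedSpace ℝ E]
    (hf : IntegrableAtFilter f (𝓝[>] a)) :
    Tendsto (fun t ↦ ∫ s in a..t, f s) (𝓝[>] a) (𝓝 0) := by
  obtain ⟨b, hint, hab⟩ := ((eventually_intervalIntegrable_of_integrableAtFilter_nhdsGT hf).and
    self_mem_nhdsWithin).exists
  have hcont := intervalIntegral.continuousOn_primitive_interval' hint Set.left_mem_uIcc
    a Set.left_mem_uIcc
  rw [ContinuousWithinAt, intervalIntegral.integral_same] at hcont
  refine hcont.mono_left (nhdsWithin_le_of_mem ?_)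
  rw [Set.uIcc_of_le (le_of_lt hab)]
  exact Icc_mem_nhdsGT hab

theorem eventually_hasDerivAt_intervalIntegral_nhdsGT [NormedSpace ℝ E] [CompleteSpace E]
    (hf : IntegrableAtFilter f (𝓝[>] a)) (hcont : ∀ᶠ t in 𝓝[>] a, ContinuousAt f t) :
    ∀ᶠ t in 𝓝[>] a, HasDerivAt (fun t ↦ ∫ s in a..t, f s) (f t) t := by
  obtain ⟨b, hab, hb⟩ := mem_nhdsGT_iff_exists_Ioo_subset.1 hcont
  have hcontOn : ContinuousOn f (Set.Ioo a b) := fun t ht ↦ (hb ht).continuousWithinAt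
  filter_upwards [eventually_intervalIntegrable_of_integrableAtFilter_nhdsGT hf,
    Ioo_mem_nhdsGT hab] with t hint ht
  exact intervalIntegral.integral_hasDerivAt_right hint
    (hcontOn.stronglyMeasurableAtFilter isOpen_Ioo t ht) (hb ht)

end Integral

theorem integrableAtFilter_nhdsGT_of_hasDerivAt_of_nonneg {G g : ℝ → ℝ} {a c : ℝ}
    (hG : Tendsto G (𝓝[>] a) (𝓝 c)) (hderiv : ∀ᶠ t in 𝓝[>] a, HasDerivAt G (g t) t)
    (hg : ∀ᶠ t in 𝓝[>] a, 0 ≤ g t) :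
    IntegrableAtFilter g (𝓝[>] a) := by
  obtain ⟨b, hab, hb⟩ := mem_nhdsGT_iff_exists_Ioc_subset.1 (hderiv.and hg)
  -- `G` is redefined at `a` so as to be continuous up to the endpoint.
  have hderiv' (t : ℝ) (ht : t ∈ Set.Ioo a b) : HasDerivAt (Function.update G a c) (g t) t :=
    (hb (Set.Ioo_subset_Ioc_self ht)).1.congr_of_eventuallyEq
      ((eventually_ne_nhds ht.1.ne').mono fun _ hs ↦ Function.update_of_ne hs c G)
  have hcont : ContinuousOn (Function.update G a c) (Set.Icc a b) := by
    rw [continuousOn_update_iff, Set.Icc_sdiff_left]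
    exact ⟨fun t ht ↦ (hb ht).1.continuousAt.continuousWithinAt,
      fun _ ↦ hG.mono_left (nhdsWithin_mono a Set.Ioc_subset_Ioi_self)⟩
  exact ⟨Set.Ioc a b, Ioc_mem_nhdsGT hab, intervalIntegral.integrableOn_deriv_of_nonneg hcont
    hderiv' (fun t ht ↦ (hb (Set.Ioo_subset_Ioc_self ht)).2)⟩

theorem isEquivalent_intervalIntegral_of_isEquivalent_deriv {f G g : ℝ → ℝ} {a : ℝ}
    (hcont : ∀ᶠ t in 𝓝[>] a, ContinuousAt f t) (hfg : f ~[𝓝[>] a] g)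
    (hg : ∀ᶠ t in 𝓝[>] a, 0 < g t) (hderiv : ∀ᶠ t in 𝓝[>] a, HasDerivAt G (g t) t)
    (hG : Tendsto G (𝓝[>] a) (𝓝 0)) :
    (fun t ↦ ∫ s in a..t, f s) ~[𝓝[>] a] G := by
  have hg_ne : ∀ᶠ t in 𝓝[>] a, g t ≠ 0 := hg.mono fun _ ↦ ne_of_gt
  have hint : IntegrableAtFilter f (𝓝[>] a) :=
    hfg.isBigO.integrableAtFilter
      (stronglyMeasurableAtFilter_nhdsGT_of_eventually_continuousAt hcont)
      (integrableAtFilter_nhdsGT_of_hasDerivAt_of_nonneg hG hderiv (hg.mono fun _ ↦ le_of_lt))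
  exact isEquivalent_of_tendsto_one <| HasDerivAt.lhopital_zero_nhdsGT
    (eventually_hasDerivAt_intervalIntegral_nhdsGT hint hcont) hderiv hg_ne
    (tendsto_intervalIntegral_nhdsGT_zero hint) hG
    ((isEquivalent_iff_tendsto_one hg_ne).1 hfg)

theorem tendsto_log_one_div_nhdsGT_zero :
    Tendsto (fun t : ℝ ↦ Real.log (1 / t)) (𝓝[>] 0) atTop := by
  simpa only [one_div, Function.comp_def] using Real.tendsto_log_atTop.comp tendsto_inv_nhdsGT_zero

theorem eventually_log_one_div_rpow_mul_rpow_pos {c : ℝ} (q α : ℝ) (hc : 0 < c) :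
    ∀ᶠ t : ℝ in 𝓝[>] 0, 0 < c * Real.log (1 / t) ^ q * t ^ α := by
  filter_upwards [self_mem_nhdsWithin, tendsto_log_one_div_nhdsGT_zero.eventually_gt_atTop 0]
    with t (ht : 0 < t) hlog
  positivity

theorem tendsto_log_one_div_rpow_mul_rpow_nhdsGT_zero (q : ℝ) {α : ℝ} (hα : 0 < α) :
    Tendsto (fun t : ℝ ↦ Real.log (1 / t) ^ q * t ^ α) (𝓝[>] 0) (𝓝 0) := by
  refine (isLittleO_abs_log_rpow_rpow_nhdsGT_zero q
    (neg_lt_zero.2 hα)).tendsto_div_nhds_zero.congr' ?_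
  filter_upwards [self_mem_nhdsWithin, tendsto_log_one_div_nhdsGT_zero.eventually_gt_atTop 0]
    with t (ht : 0 < t) hlog
  have habs : |Real.log t| = Real.log (1 / t) := by
    rw [← abs_of_pos hlog, one_div, Real.log_inv, abs_neg]
  rw [habs, Real.rpow_neg ht.le, div_inv_eq_mul]

theorem hasDerivAt_log_one_div_rpow_mul_rpow (q α : ℝ) {t : ℝ} (ht : t ≠ 0)
    (hlog : Real.log (1 / t) ≠ 0) :
    HasDerivAt (fun t : ℝ ↦ Real.log (1 / t) ^ q * t ^ α)
      (Real.log (1 / t) ^ q * t ^ (α - 1) * (α - q / Real.log (1 / t))) t := by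
  have hderiv_log : HasDerivAt (fun t : ℝ ↦ Real.log (1 / t)) (-t⁻¹) t := by
    simpa only [one_div, Real.log_inv] using (Real.hasDerivAt_log ht).fun_neg
  refine ((hderiv_log.rpow_const (Or.inl hlog)).mul
    (Real.hasDerivAt_rpow_const (Or.inl ht))).congr_deriv ?_
  rw [Real.rpow_sub_one hlog, Real.rpow_sub_one ht]
  field_simp
  ring

theorem isEquivalent_intervalIntegral_of_isEquivalent_log_one_div_rpow_mul_rpow
    {f : ℝ → ℝ} {c α : ℝ} (q : ℝ) (hc : 0 < c) (hα : 0 < α)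
    (hcont : ∀ᶠ t in 𝓝[>] 0, ContinuousAt f t)
    (hf : f ~[𝓝[>] 0] fun r ↦ c * Real.log (1 / r) ^ q * r ^ (α - 1)) :
    (fun t ↦ ∫ s in (0 : ℝ)..t, f s) ~[𝓝[>] 0]
      fun t ↦ c / α * Real.log (1 / t) ^ q * t ^ α := by
  have hfactor : Tendsto (fun t : ℝ ↦ (α - q / Real.log (1 / t)) / α) (𝓝[>] 0) (𝓝 1) := by
    simpa [hα.ne'] using
      ((tendsto_log_one_div_nhdsGT_zero.const_div_atTop q).const_sub α).div_const α
  have hderiv_equiv : (fun t : ℝ ↦ c * Real.log (1 / t) ^ q * t ^ (α - 1)) ~[𝓝[>] 0]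
      fun t ↦ c / α * (Real.log (1 / t) ^ q * t ^ (α - 1) * (α - q / Real.log (1 / t))) := by
    refine (isEquivalent_iff_exists_eq_mul.2 ⟨_, hfactor, .of_forall fun t ↦ ?_⟩).symm
    simp only [Pi.mul_apply]
    ring
  refine isEquivalent_intervalIntegral_of_isEquivalent_deriv hcont (hf.trans hderiv_equiv)
    (hderiv_equiv.symm.eventually_pos (eventually_log_one_div_rpow_mul_rpow_pos q (α - 1) hc)) ?_ ?_
  · filter_upwards [self_mem_nhdsWithin, tendsto_log_one_div_nhdsGT_zero.eventually_ne_atTop 0]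
      with t (ht : 0 < t) hlog
    simpa only [mul_assoc] using
      (hasDerivAt_log_one_div_rpow_mul_rpow q α ht.ne' hlog).const_mul (c / α)
  · simpa only [mul_assoc, mul_zero] using
      (tendsto_log_one_div_rpow_mul_rpow_nhdsGT_zero q hα).const_mul (c / α)

/-- Regular variation at `0` with index `ρ`: the ratio `f (l * t) / f t` tends to `l ^ ρ` as
`t → 0⁺`, for each `l > 0`. Positivity and measurability of `f` are not part of the definition. -/
def RegularlyVaryingAtZero (f : ℝ → ℝ) (ρ : ℝ) : Prop :=
  ∀ l : ℝ, 0 < l → Tendsto (fun t ↦ f (l * t) / f t) (𝓝[>] 0) (𝓝 (l ^ ρ))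

theorem tendsto_const_mul_nhdsGT_zero {l : ℝ} (hl : 0 < l) :
    Tendsto (fun t ↦ l * t) (𝓝[>] 0) (𝓝[>] 0) := by
  refine tendsto_nhdsWithin_iff.2 ⟨?_, ?_⟩
  · simpa using (tendsto_id.const_mul l).mono_left (nhdsWithin_le_nhds (a := (0 : ℝ)))
  · filter_upwards [self_mem_nhdsWithin] with t ht using mul_pos hl ht

namespace RegularlyVaryingAtZero

variable {f g : ℝ → ℝ} {ρ σ : ℝ}

theorem of_isEquivalent (hf : RegularlyVaryingAtZero f ρ) (hgf : g ~[𝓝[>] 0] f) :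
    RegularlyVaryingAtZero g ρ := fun l hl ↦
  ((hgf.comp_tendsto (tendsto_const_mul_nhdsGT_zero hl)).div hgf).symm.tendsto_nhds (hf l hl)

protected theorem mul (hf : RegularlyVaryingAtZero f ρ) (hg : RegularlyVaryingAtZero g σ) :
    RegularlyVaryingAtZero (fun t ↦ f t * g t) (ρ + σ) := fun l hl ↦ by
  simpa only [mul_div_mul_comm, Real.rpow_add hl] using (hf l hl).mul (hg l hl)

theorem const_mul {c : ℝ} (hc : c ≠ 0) (hf : RegularlyVaryingAtZero f ρ) :
    RegularlyVaryingAtZero (fun t ↦ c * f t) ρ := fun l hl ↦ by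
  simpa only [mul_div_mul_left _ _ hc] using hf l hl

protected theorem rpow (hf : RegularlyVaryingAtZero f ρ) (hnonneg : ∀ᶠ t in 𝓝[>] 0, 0 ≤ f t)
    (q : ℝ) : RegularlyVaryingAtZero (fun t ↦ f t ^ q) (ρ * q) := fun l hl ↦ by
  rw [Real.rpow_mul hl.le]
  refine ((hf l hl).rpow_const (Or.inl (Real.rpow_pos_of_pos hl ρ).ne')).congr' ?_
  filter_upwards [hnonneg, (tendsto_const_mul_nhdsGT_zero hl).eventually hnonneg] with t ht hlt
  exact Real.div_rpow hlt ht q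

protected theorem sqrt (hf : RegularlyVaryingAtZero f ρ) (hnonneg : ∀ᶠ t in 𝓝[>] 0, 0 ≤ f t) :
    RegularlyVaryingAtZero (fun t ↦ √(f t)) (ρ / 2) := by
  simpa only [Real.sqrt_eq_rpow, mul_one_div] using hf.rpow hnonneg (1 / 2)

end RegularlyVaryingAtZero

theorem regularlyVaryingAtZero_rpow (ρ : ℝ) : RegularlyVaryingAtZero (fun t ↦ t ^ ρ) ρ := by
  refine fun l hl ↦ tendsto_const_nhds.congr' ?_
  filter_upwards [self_mem_nhdsWithin] with t (ht : 0 < t)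
  rw [Real.mul_rpow hl.le ht.le, mul_div_cancel_right₀ _ (Real.rpow_pos_of_pos ht ρ).ne']

theorem regularlyVaryingAtZero_log_one_div :
    RegularlyVaryingAtZero (fun t ↦ Real.log (1 / t)) 0 := fun l hl ↦ by
  have hlim : Tendsto (fun t : ℝ ↦ 1 + Real.log (1 / l) / Real.log (1 / t)) (𝓝[>] 0) (𝓝 1) := by
    simpa only [add_zero] using
      (tendsto_log_one_div_nhdsGT_zero.const_div_atTop (Real.log (1 / l))).const_add 1
  rw [Real.rpow_zero]
  refine hlim.congr' ?_
  filter_upwards [self_mem_nhdsWithin, tendsto_log_one_div_nhdsGT_zero.eventually_ne_atTop 0]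
    with t (ht : 0 < t) hlog
  have hsplit : Real.log (1 / (l * t)) = Real.log (1 / t) + Real.log (1 / l) := by
    rw [← Real.log_mul (by positivity) (by positivity), one_div_mul_one_div, mul_comm t]
  rw [hsplit, add_div, div_self hlog]

theorem regularlyVaryingAtZero_log_one_div_rpow_mul_rpow {c : ℝ} (hc : c ≠ 0) (q α : ℝ) :
    RegularlyVaryingAtZero (fun t ↦ c * Real.log (1 / t) ^ q * t ^ α) α := by
  have hlog := regularlyVaryingAtZero_log_one_div.rpow
    (tendsto_log_one_div_nhdsGT_zero.eventually_ge_atTop 0) q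
  simpa only [zero_mul, zero_add] using (hlog.const_mul hc).mul (regularlyVaryingAtZero_rpow α)

theorem continuousAt_logKernel (H ζ p C : ℝ) {r : ℝ} (hr : r ≠ 0) :
    ContinuousAt (logKernel H ζ p C) r := by
  have hmax : max (ζ * Real.log (1 / r)) 1 ≠ 0 := (zero_lt_one.trans_le (le_max_right _ _)).ne'
  have hlog : ContinuousAt (fun r ↦ Real.log (1 / r)) r := by
    fun_prop (disch := simp [hr])
  exact (continuousAt_const.mul (Real.continuousAt_rpow_const r _ (Or.inl hr))).mul
    (((hlog.const_mul ζ).max continuousAt_const).rpow_const (Or.inl hmax))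

theorem logKernel_sq_eventuallyEq (H p C : ℝ) {ζ : ℝ} (hζ : 0 < ζ) :
    (fun r ↦ logKernel H ζ p C r ^ 2) =ᶠ[𝓝[>] 0]
      fun r ↦ C ^ 2 * ζ ^ (-(2 * p)) * Real.log (1 / r) ^ (-(2 * p)) * r ^ (2 * H - 1) := by
  have hlog_large : ∀ᶠ r : ℝ in 𝓝[>] 0, 1 ≤ ζ * Real.log (1 / r) :=
    (tendsto_log_one_div_nhdsGT_zero.const_mul_atTop hζ).eventually_ge_atTop 1
  filter_upwards [self_mem_nhdsWithin, tendsto_log_one_div_nhdsGT_zero.eventually_ge_atTop 0,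
    hlog_large] with r (hr : 0 < r) hlog hcap
  have hsq {x : ℝ} (hx : 0 ≤ x) (y : ℝ) : (x ^ y) ^ 2 = x ^ (2 * y) := by
    rw [← Real.rpow_mul_natCast hx, Nat.cast_ofNat, mul_comm]
  rw [logKernel, max_eq_left hcap, mul_pow, mul_pow, hsq hr.le, hsq (zero_le_one.trans hcap),
    Real.mul_rpow hζ.le hlog]
  ring_nf

theorem isEquivalent_integral_logKernel_sq {H ζ C : ℝ} (p : ℝ) (hH : 0 < H) (hζ : 0 < ζ)
    (hC : C ≠ 0) :
    (fun t ↦ ∫ s in (0 : ℝ)..t, logKernel H ζ p C s ^ 2) ~[𝓝[>] 0] fun t ↦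
      C ^ 2 * ζ ^ (-(2 * p)) / (2 * H) * Real.log (1 / t) ^ (-(2 * p)) * t ^ (2 * H) :=
  isEquivalent_intervalIntegral_of_isEquivalent_log_one_div_rpow_mul_rpow _
    (by positivity) (by positivity)
    (eventually_mem_nhdsWithin.mono fun _ hr ↦
      (continuousAt_logKernel H ζ p C (ne_of_gt hr)).pow 2)
    (logKernel_sq_eventuallyEq H p C hζ).isEquivalent

theorem regularlyVaryingAtZero_sdev {H ζ C : ℝ} (p : ℝ) (hH : 0 < H) (hζ : 0 < ζ) (hC : C ≠ 0) :
    RegularlyVaryingAtZero (sdev H ζ p C) H := by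
  have hvariance := (regularlyVaryingAtZero_log_one_div_rpow_mul_rpow
    (by positivity) _ _).of_isEquivalent (isEquivalent_integral_logKernel_sq p hH hζ hC)
  have hnonneg : ∀ᶠ t : ℝ in 𝓝[>] 0, 0 ≤ ∫ s in (0 : ℝ)..t, logKernel H ζ p C s ^ 2 := by
    filter_upwards [self_mem_nhdsWithin] with t (ht : 0 < t)
    exact intervalIntegral.integral_nonneg ht.le fun _ _ ↦ sq_nonneg _
  have hsqrt := hvariance.sqrt hnonneg
  rwa [mul_div_cancel_left₀ H two_ne_zero] at hsqrt

theorem variance_small_time_asymptotic_general {H ζ C : ℝ} (p : ℝ) (hH : 0 < H)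
    (hζ : 0 < ζ) (hC : C ≠ 0) :
    Tendsto
      (fun t : ℝ ↦
        (∫ s in (0 : ℝ)..t, (logKernel H ζ p C s) ^ 2)
          / (C ^ 2 * ζ ^ (-(2 * p)) / (2 * H) * (Real.log (1 / t)) ^ (-(2 * p)) * t ^ (2 * H)))
      (𝓝[>] 0) (𝓝 1)
    ∧ ∀ l : ℝ, 0 < l →
        Tendsto (fun t : ℝ ↦ sdev H ζ p C (l * t) / sdev H ζ p C t)
          (𝓝[>] 0) (𝓝 (l ^ H)) := by
  have hne : ∀ᶠ t : ℝ in 𝓝[>] 0,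
      C ^ 2 * ζ ^ (-(2 * p)) / (2 * H) * Real.log (1 / t) ^ (-(2 * p)) * t ^ (2 * H) ≠ 0 :=
    (eventually_log_one_div_rpow_mul_rpow_pos _ _ (by positivity)).mono fun _ ↦ ne_of_gt
  exact ⟨(isEquivalent_iff_tendsto_one hne).1 (isEquivalent_integral_logKernel_sq p hH hζ hC),
    regularlyVaryingAtZero_sdev p hH hζ hC⟩

theorem variance_small_time_asymptotic (H ζ p C : ℝ) (hH0 : 0 < H) (hH : H < 1/2)
    (hζ : 0 < ζ) (hp : 1 < p) (hC : 0 < C) :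
    Tendsto
      (fun t : ℝ =>
        (∫ s in (0 : ℝ)..t, (logKernel H ζ p C s) ^ 2)
          / (C ^ 2 * ζ ^ (-(2 * p)) / (2 * H) * (Real.log (1 / t)) ^ (-(2 * p)) * t ^ (2 * H)))
      (nhdsWithin 0 (Set.Ioi 0)) (nhds 1)
    ∧ ∀ l : ℝ, 0 < l →
        Tendsto (fun t : ℝ => sdev H ζ p C (l * t) / sdev H ζ p C t)
          (nhdsWithin 0 (Set.Ioi 0)) (nhds (l ^ H)) := by
  exact variance_small_time_asymptotic_general p hH0 hζ hC.ne'
end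

section
/- Let H ∈ (0,1). Then ∫₁^∞ ( y^{H−1/2} − (y−1)^{H−1/2} )² dy < ∞, i.e. the function y ↦ y^{H−1/2} − (y−1)^{H−1/2} is square integrable on (1,∞). -/
open MeasureTheory

/-!
To see that `y ^ a - (y - h) ^ a` is in `L^p(h, ∞)`, split at `2h`. On `(h, 2h]` each of the two
powers is in `L^p` on its own, the only singularity being that of `(y - h) ^ a` at `y = h`, which
is harmless because `a p > -1`. On `(2h, ∞)` the cancellation matters: by the mean value
inequality the difference is at most `h |a| (y - h) ^ (a - 1)`, which is in `L^p` at infinity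
because `(a - 1) p < -1`. Square integrability is the case `p = 2`, `h = 1`, `a = H - 1/2`.
-/

open Set
open scoped ENNReal

theorem memLp_comp_sub_right_restrict_preimage {G E : Type*} [AddGroup G] [MeasurableSpace G]
    [MeasurableAdd G] [NormedAddCommGroup E] {μ : Measure G} [μ.IsAddRightInvariant]
    {f : G → E} {p : ℝ≥0∞} {s : Set G} (hf : MemLp f p (μ.restrict s)) (c : G) :
    MemLp (fun x => f (x - c)) p (μ.restrict ((fun x => x - c) ⁻¹' s)) :=
  hf.comp_measurePreserving <|
    (measurePreserving_sub_right μ c).restrict_preimage_emb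
      (MeasurableEquiv.subRight c).measurableEmbedding s

theorem memLp_restrict_union {α E : Type*} [MeasurableSpace α] [NormedAddCommGroup E]
    {μ : Measure α} {f : α → E} {p : ℝ≥0∞} {s t : Set α} (hs : MeasurableSet s)
    (hfs : MemLp f p (μ.restrict s)) (hft : MemLp f p (μ.restrict t)) :
    MemLp f p (μ.restrict (s ∪ t)) := by
  classical
  have hfs' : MemLp f p ((μ.restrict (s ∪ t)).restrict s) := by
    rwa [Measure.restrict_restrict_of_subset subset_union_left]
  have hft' : MemLp f p ((μ.restrict (s ∪ t)).restrict sᶜ) := by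
    rw [Measure.restrict_restrict hs.compl]
    refine hft.mono_measure (Measure.restrict_mono ?_ le_rfl)
    rintro x ⟨hxs, hx⟩
    exact hx.resolve_left hxs
  simpa only [piecewise_same] using MemLp.piecewise hs hfs' hft'

section Rpow

variable {a : ℝ} {p : ℝ≥0∞}

theorem norm_rpow_rpow_of_nonneg {x : ℝ} (hx : 0 ≤ x) (a b : ℝ) : ‖x ^ a‖ ^ b = x ^ (a * b) := by
  rw [Real.norm_of_nonneg (Real.rpow_nonneg hx a), Real.rpow_mul hx]

theorem memLp_rpow_Ioc_zero (hp : p ≠ ∞) (ha : -1 < a * p.toReal) (b : ℝ) :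
    MemLp (fun x : ℝ => x ^ a) p (volume.restrict (Ioc 0 b)) := by
  have hmeas : AEStronglyMeasurable (fun x : ℝ => x ^ a) (volume.restrict (Ioc 0 b)) := by
    fun_prop
  rcases eq_or_ne p 0 with rfl | hp0
  · exact memLp_zero_iff_aestronglyMeasurable.2 hmeas
  rw [← integrable_norm_rpow_iff hmeas hp0 hp]
  have hint : IntegrableOn (fun x : ℝ => x ^ (a * p.toReal)) (Ioc 0 b) :=
    (intervalIntegral.intervalIntegrable_rpow' ha).1
  exact hint.congr_fun (fun x hx => (norm_rpow_rpow_of_nonneg hx.1.le _ _).symm) measurableSet_Ioc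

theorem memLp_rpow_Ioi (ha : a * p.toReal < -1) {c : ℝ} (hc : 0 < c) :
    MemLp (fun x : ℝ => x ^ a) p (volume.restrict (Ioi c)) := by
  have hp_toReal : p.toReal ≠ 0 := fun h => by norm_num [h] at ha
  obtain ⟨hp0, hp⟩ := ENNReal.toReal_ne_zero.1 hp_toReal
  rw [← integrable_norm_rpow_iff (by fun_prop) hp0 hp]
  exact (integrableOn_Ioi_rpow_of_lt ha hc).congr_fun
    (fun x hx => (norm_rpow_rpow_of_nonneg (hc.trans hx).le _ _).symm) measurableSet_Ioi

theorem abs_rpow_sub_rpow_le (ha : a ≤ 1) {x y : ℝ} (hx : 0 < x) (hxy : x ≤ y) :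
    |y ^ a - x ^ a| ≤ |a| * x ^ (a - 1) * (y - x) := by
  have hderiv : ∀ t ∈ Icc x y,
      HasDerivWithinAt (fun t : ℝ => t ^ a) (a * t ^ (a - 1)) (Icc x y) t := fun t ht =>
    (Real.hasDerivAt_rpow_const (.inl (hx.trans_le ht.1).ne')).hasDerivWithinAt
  have hbound : ∀ t ∈ Ico x y, ‖a * t ^ (a - 1)‖ ≤ |a| * x ^ (a - 1) := fun t ht => by
    rw [norm_mul, Real.norm_eq_abs a,
      Real.norm_of_nonneg (Real.rpow_nonneg (hx.trans_le ht.1).le _)]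
    gcongr ?_ * ?_
    exact Real.rpow_le_rpow_of_nonpos hx ht.1 (sub_nonpos.2 ha)
  exact norm_image_sub_le_of_norm_deriv_le_segment' hderiv hbound y (right_mem_Icc.2 hxy)

variable {h : ℝ}

theorem memLp_rpow_sub_rpow_Ioc_two_mul (hh : 0 < h) (hp : p ≠ ∞) (ha : -1 < a * p.toReal) :
    MemLp (fun y : ℝ => y ^ a - (y - h) ^ a) p (volume.restrict (Ioc h (2 * h))) := by
  have hfst : MemLp (fun y : ℝ => y ^ a) p (volume.restrict (Ioc h (2 * h))) :=
    (memLp_rpow_Ioc_zero hp ha (2 * h)).mono_measure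
      (Measure.restrict_mono (Ioc_subset_Ioc_left hh.le) le_rfl)
  have hsnd : MemLp (fun y : ℝ => (y - h) ^ a) p (volume.restrict (Ioc h (2 * h))) := by
    simpa only [preimage_sub_const_Ioc, zero_add, ← two_mul] using
      memLp_comp_sub_right_restrict_preimage (memLp_rpow_Ioc_zero hp ha h) h
  exact hfst.sub hsnd

theorem memLp_rpow_sub_rpow_Ioi_two_mul (hh : 0 < h) (ha : (a - 1) * p.toReal < -1) :
    MemLp (fun y : ℝ => y ^ a - (y - h) ^ a) p (volume.restrict (Ioi (2 * h))) := by
  have ha_le : a ≤ 1 := by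
    by_contra! h1a
    linarith [mul_nonneg (sub_nonneg.2 h1a.le) p.toReal_nonneg]
  have hdom : MemLp (fun y : ℝ => (y - h) ^ (a - 1)) p (volume.restrict (Ioi (2 * h))) := by
    simpa only [preimage_sub_const_Ioi, ← two_mul] using
      memLp_comp_sub_right_restrict_preimage (memLp_rpow_Ioi ha hh) h
  refine hdom.of_le_mul (c := |a| * h) (by fun_prop) ?_
  filter_upwards [ae_restrict_mem measurableSet_Ioi] with y (hy : 2 * h < y)
  have hyh : 0 < y - h := by linarith
  calc ‖y ^ a - (y - h) ^ a‖
      ≤ |a| * (y - h) ^ (a - 1) * (y - (y - h)) :=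
        abs_rpow_sub_rpow_le ha_le hyh (sub_le_self y hh.le)
    _ = |a| * h * ‖(y - h) ^ (a - 1)‖ := by
        rw [Real.norm_of_nonneg (Real.rpow_nonneg hyh.le _)]
        ring

theorem square_integrable_power_difference_general (hh : 0 < h) (ha_zero : -1 < a * p.toReal)
    (ha_top : (a - 1) * p.toReal < -1) :
    MemLp (fun y : ℝ => y ^ a - (y - h) ^ a) p (volume.restrict (Ioi h)) := by
  have hp : p ≠ ∞ := by
    rintro rfl
    norm_num at ha_top
  rw [← Ioc_union_Ioi_eq_Ioi (by linarith : h ≤ 2 * h)]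
  exact memLp_restrict_union measurableSet_Ioc (memLp_rpow_sub_rpow_Ioc_two_mul hh hp ha_zero)
    (memLp_rpow_sub_rpow_Ioi_two_mul hh ha_top)

end Rpow

theorem square_integrable_power_difference (H : ℝ) (hH0 : 0 < H) (hH : H < 1) :
    IntegrableOn (fun y : ℝ => (y ^ (H - 1/2) - (y - 1) ^ (H - 1/2)) ^ 2)
      (Set.Ioi (1 : ℝ)) :=
  (square_integrable_power_difference_general (p := 2) one_pos
    (by norm_num; linarith) (by norm_num; linarith)).integrable_sq
end
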